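/- The odd elements δ_1 and δ_2 of W ⊗ U(g) satisfy the super-commutator relations [δ_1, δ_2] + [δ_2, δ_1] = −[δ_1, δ_1] and [δ_2, δ_2] = 0. Consequently the operator δ = δ_1 + δ_2 satisfies δ² = 0. -/

import Mathlib

/-!
Write `δ₂ = Σ_d φ_d ∂_d`, where `φ_d` is quadratic in the `X_a` and homogeneous of the parity of
`E_d`.

* `δ₁² = ½ Σ ± ad(E_a)_{eb} X_a X_b E_e` by super-symmetrising and using the relations of `U(g)`
  (`d1_sq`). In `δ₁δ₂ + δ₂δ₁` the reordering signs cancel everything except the contraction of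
  `∂_d` with `X_d`, which leaves `Σ_d ± φ_d E_d = -δ₁²` (`d1_d2`).
* `δ₂²` is a second-order part `Σ ± φ_b φ_d ∂_b ∂_d`, super-antisymmetric in `b, d` and hence zero,
  plus `Σ_d (Σ_b φ_b (∂_b φ_d)) ∂_d` (`d2_sq`). The cubic coefficient `S = Σ_b φ_b (∂_b φ_d)`
  vanishes by the Jacobi identity, which after reordering the `X`s reads `S = -S - S` (`phi_dphi`).

These computations only use the defining relations, so they are carried out in an arbitrary
algebra satisfying them.
-/


set_option synthInstance.maxHeartbeats 1000000
set_option maxHeartbeats 1000000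

/-!
STATEMENT 4: the odd elements `δ₁, δ₂ ∈ W ⊗ U(g)` satisfy
`[δ₁, δ₂] + [δ₂, δ₁] = -[δ₁, δ₁]` and `[δ₂, δ₂] = 0`; consequently `δ = δ₁ + δ₂`
satisfies `δ² = 0`.  (For odd elements `x, y` the super-commutator is `[x,y] = xy + yx`.)

We present the super tensor product `W ⊗ U(g)` by generators `X a, ∂ a` (the Weyl
superalgebra `W = W_{Πg*}`, parity `p a + 1`) and `E a` (`U(g)`, parity `p a`), with the
two factors super-commuting; `g` has homogeneous basis `{E_a}_{a∈Λ}` and structure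
constants `f a b c = ad(E_a)_{bc}`, subject to the Lie superalgebra axioms `hpar`,
`hskew`, `hjac`.
-/

noncomputable section

/-- The sign `(-1)^ε` for `ε : ℤ/2`. -/
noncomputable def sgn (ε : ZMod 2) : ℂ := if ε = 0 then 1 else -1

/-- Generators of the superalgebra `W ⊗ U(g)`: the generators `X a`, `∂ a` of the Weyl
superalgebra `W = W_{Πg*}` and the generators `E a` of `U(g)`. -/
inductive WUGen (Λ : Type) : Type
  | X : Λ → WUGen Λ
  | D : Λ → WUGen Λ
  | E : Λ → WUGen Λ

variable {Λ : Type} [DecidableEq Λ] [Fintype Λ]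

/-- The parity of the generators: `[X a] = [∂ a] = p a + 1`, `[E a] = p a`. -/
def WUGen.parity (p : Λ → ZMod 2) : WUGen Λ → ZMod 2
  | .X a => p a + 1
  | .D a => p a + 1
  | .E a => p a

/-- The defining relations of `W ⊗ U(g)` (the super tensor product of the Weyl superalgebra
`W_{Πg*}` and the universal enveloping superalgebra `U(g)`): the super-Weyl relations among
the `X a, ∂ a`, the relations `E_aE_b - (-1)^{[E_a][E_b]}E_bE_a = [E_a,E_b] = Σ_e f a e b E_e`
of `U(g)`, and super-commutation of the two tensor factors. -/
inductive WURel (p : Λ → ZMod 2) (f : Λ → Λ → Λ → ℂ) :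
    FreeAlgebra ℂ (WUGen Λ) → FreeAlgebra ℂ (WUGen Λ) → Prop
  | XX (a b : Λ) : WURel p f
      (FreeAlgebra.ι ℂ (WUGen.X a) * FreeAlgebra.ι ℂ (WUGen.X b))
      (sgn ((p a + 1) * (p b + 1)) •
        (FreeAlgebra.ι ℂ (WUGen.X b) * FreeAlgebra.ι ℂ (WUGen.X a)))
  | DD (a b : Λ) : WURel p f
      (FreeAlgebra.ι ℂ (WUGen.D a) * FreeAlgebra.ι ℂ (WUGen.D b))
      (sgn ((p a + 1) * (p b + 1)) •
        (FreeAlgebra.ι ℂ (WUGen.D b) * FreeAlgebra.ι ℂ (WUGen.D a)))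
  | DX (a b : Λ) : WURel p f
      (FreeAlgebra.ι ℂ (WUGen.D a) * FreeAlgebra.ι ℂ (WUGen.X b))
      (sgn ((p a + 1) * (p b + 1)) •
        (FreeAlgebra.ι ℂ (WUGen.X b) * FreeAlgebra.ι ℂ (WUGen.D a)) +
        if a = b then 1 else 0)
  | EE (a b : Λ) : WURel p f
      (FreeAlgebra.ι ℂ (WUGen.E a) * FreeAlgebra.ι ℂ (WUGen.E b))
      (sgn (p a * p b) •
        (FreeAlgebra.ι ℂ (WUGen.E b) * FreeAlgebra.ι ℂ (WUGen.E a)) +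
        ∑ e : Λ, f a e b • FreeAlgebra.ι ℂ (WUGen.E e))
  | EX (a b : Λ) : WURel p f
      (FreeAlgebra.ι ℂ (WUGen.E a) * FreeAlgebra.ι ℂ (WUGen.X b))
      (sgn (p a * (p b + 1)) •
        (FreeAlgebra.ι ℂ (WUGen.X b) * FreeAlgebra.ι ℂ (WUGen.E a)))
  | ED (a b : Λ) : WURel p f
      (FreeAlgebra.ι ℂ (WUGen.E a) * FreeAlgebra.ι ℂ (WUGen.D b))
      (sgn (p a * (p b + 1)) •
        (FreeAlgebra.ι ℂ (WUGen.D b) * FreeAlgebra.ι ℂ (WUGen.E a)))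

/-- The superalgebra `W ⊗ U(g)`. -/
abbrev WU (p : Λ → ZMod 2) (f : Λ → Λ → Λ → ℂ) : Type := RingQuot (WURel p f)

/-- The image of a generator in `W ⊗ U(g)`. -/
noncomputable def genWU (p : Λ → ZMod 2) (f : Λ → Λ → Λ → ℂ) (s : WUGen Λ) : WU p f :=
  RingQuot.mkAlgHom ℂ (WURel p f) (FreeAlgebra.ι ℂ s)

/-- `X a ⊗ 1`. -/
noncomputable def XU (p : Λ → ZMod 2) (f : Λ → Λ → Λ → ℂ) (a : Λ) : WU p f :=
  genWU p f (WUGen.X a)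

/-- `∂ a ⊗ 1`. -/
noncomputable def DU (p : Λ → ZMod 2) (f : Λ → Λ → Λ → ℂ) (a : Λ) : WU p f :=
  genWU p f (WUGen.D a)

/-- `1 ⊗ E a`. -/
noncomputable def EU (p : Λ → ZMod 2) (f : Λ → Λ → Λ → ℂ) (a : Λ) : WU p f :=
  genWU p f (WUGen.E a)

/-- The homogeneous subspace of `W ⊗ U(g)` of parity `ε`: the span of all products of
generators of total parity `ε`. -/
noncomputable def WUpar (p : Λ → ZMod 2) (f : Λ → Λ → Λ → ℂ) (ε : ZMod 2) :
    Submodule ℂ (WU p f) :=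
  Submodule.span ℂ
    {w | ∃ l : List (WUGen Λ),
      w = (l.map (genWU p f)).prod ∧ (l.map (WUGen.parity p)).sum = ε}

/-- `Γ_a = Γ(E_a) = -Σ_{b,c} (-1)^{[E_a][E_c]} X_c ad(E_a)_{bc} ∂_b ∈ W ⊗ U(g)`. -/
noncomputable def GamU (p : Λ → ZMod 2) (f : Λ → Λ → Λ → ℂ) (a : Λ) : WU p f :=
  -∑ b : Λ, ∑ c : Λ, (sgn (p a * p c) * f a b c) • (XU p f c * DU p f b)

/-- `δ₁ = Σ_a (-1)^{[E_a]} X_a ⊗ E_a`. -/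
noncomputable def delta1 (p : Λ → ZMod 2) (f : Λ → Λ → Λ → ℂ) : WU p f :=
  ∑ a : Λ, sgn (p a) • (XU p f a * EU p f a)

/-- `δ₂ = (1/2) Σ_a (-1)^{[E_a]} X_a Γ_a ⊗ 1`. -/
noncomputable def delta2 (p : Λ → ZMod 2) (f : Λ → Λ → Λ → ℂ) : WU p f :=
  (1 / 2 : ℂ) • ∑ a : Λ, sgn (p a) • (XU p f a * GamU p f a)

/-- `δ = δ₁ + δ₂`. -/
noncomputable def deltaWU (p : Λ → ZMod 2) (f : Λ → Λ → Λ → ℂ) : WU p f :=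
  delta1 p f + delta2 p f

/-! ### Signs and super-commutation -/

theorem sgn_one : sgn 1 = -1 := by simp [sgn]

theorem sgn_add (x y : ZMod 2) : sgn (x + y) = sgn x * sgn y := by
  have h : ∀ z : ZMod 2, z = 0 ∨ z = 1 := by decide
  have h2 : (1 : ZMod 2) + 1 = 0 := by decide
  rcases h x with rfl | rfl <;> rcases h y with rfl | rfl <;> simp [sgn, h2]

theorem sgn_mul_self (x : ZMod 2) : sgn x * sgn x = 1 := by
  unfold sgn; split_ifs <;> norm_num

/-- `x y = s y x`: the elements `x` and `y` commute up to the scalar `s`. -/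
def SC {A : Type*} [Ring A] [Algebra ℂ A] (s : ℂ) (x y : A) : Prop := x * y = s • (y * x)

namespace SC

variable {A : Type*} [Ring A] [Algebra ℂ A] {s t : ℂ} {x y z : A}

theorem mul_right (h : SC s x y) (k : SC t x z) : SC (s * t) x (y * z) := by
  unfold SC at *
  rw [← mul_assoc, h, smul_mul_assoc, mul_assoc, k, mul_smul_comm, smul_smul, mul_assoc]

theorem mul_left (h : SC s x z) (k : SC t y z) : SC (s * t) (x * y) z := by
  unfold SC at *
  rw [mul_assoc, k, mul_smul_comm, ← mul_assoc, h, smul_mul_assoc, smul_smul, mul_assoc,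
    mul_comm s t]

/-- The commutation hypothesis is only needed when the coefficient does not vanish; this is how
the parity condition on the structure constants enters. -/
theorem smul_right {c : ℂ} (h : c ≠ 0 → SC s x y) : SC s x (c • y) := by
  unfold SC at *
  by_cases hc : c = 0
  · simp [hc]
  · rw [mul_smul_comm, h hc, smul_mul_assoc, smul_comm]

theorem smul_left {c : ℂ} (h : c ≠ 0 → SC s x y) : SC s (c • x) y := by
  unfold SC at *
  by_cases hc : c = 0
  · simp [hc]
  · rw [mul_smul_comm, smul_mul_assoc, h hc, smul_comm]

theorem sum_right {ι : Type*} {S : Finset ι} {u : ι → A} (h : ∀ i, SC s x (u i)) :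
    SC s x (∑ i ∈ S, u i) := by
  unfold SC at *
  rw [Finset.mul_sum, Finset.sum_mul, Finset.smul_sum]
  exact Finset.sum_congr rfl fun i _ => h i

theorem sum_left {ι : Type*} {S : Finset ι} {u : ι → A} (h : ∀ i, SC s (u i) y) :
    SC s (∑ i ∈ S, u i) y := by
  unfold SC at *
  rw [Finset.mul_sum, Finset.sum_mul, Finset.smul_sum]
  exact Finset.sum_congr rfl fun i _ => h i

theorem of_eq (h : SC s x y) (e : s = t) : SC t x y := e ▸ h

end SC

theorem eq_zero_of_eq_neg {M : Type*} [AddCommGroup M] [Module ℂ M] {S : M} (h : S = -S) :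
    S = 0 := by
  have h2 : (2 : ℂ) • S = 0 := by rw [two_smul]; exact eq_neg_iff_add_eq_zero.mp h
  exact (smul_eq_zero.mp h2).resolve_left two_ne_zero

theorem sum_antisymm {M : Type*} [AddCommGroup M] [Module ℂ M] (F : Λ → Λ → M)
    (h : ∀ a b, F a b = -F b a) : ∑ a, ∑ b, F a b = 0 := by
  apply eq_zero_of_eq_neg (S := ∑ a, ∑ b, F a b)
  conv_lhs => rw [Finset.sum_comm]
  simp only [← Finset.sum_neg_distrib]
  exact Finset.sum_congr rfl fun a _ => Finset.sum_congr rfl fun b _ => h b a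

/-! ### The computation in an arbitrary algebra satisfying the relations -/

/-- The Lie superalgebra axioms for the structure constants `f a b c = ad(E_a)_{bc}`. -/
structure LieAx (p : Λ → ZMod 2) (f : Λ → Λ → Λ → ℂ) : Prop where
  par : ∀ a b c, f a b c ≠ 0 → p b = p a + p c
  skew : ∀ a b c, f a b c = -sgn (p a * p c) * f c b a
  jac : ∀ a b c d, ∑ e : Λ, f b e c * f a d e =
      ∑ e : Λ, f a e b * f e d c + sgn (p a * p b) * ∑ e : Λ, f a e c * f b d e

/-- The elements `X a`, `D a`, `E a` of an algebra satisfy the relations of `W ⊗ U(g)`. -/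
structure WUAx {A : Type*} [Ring A] [Algebra ℂ A] (p : Λ → ZMod 2) (f : Λ → Λ → Λ → ℂ)
    (X D E : Λ → A) : Prop where
  xx : ∀ a b, SC (sgn ((p a + 1) * (p b + 1))) (X a) (X b)
  dd : ∀ a b, SC (sgn ((p a + 1) * (p b + 1))) (D a) (D b)
  dx : ∀ a b, D a * X b = sgn ((p a + 1) * (p b + 1)) • (X b * D a) + if a = b then 1 else 0
  ee : ∀ a b, E a * E b = sgn (p a * p b) • (E b * E a) + ∑ e, f a e b • E e
  ex : ∀ a b, SC (sgn (p a * (p b + 1))) (E a) (X b)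
  ed : ∀ a b, SC (sgn (p a * (p b + 1))) (E a) (D b)

section Abstract

variable {A : Type*} [Ring A] [Algebra ℂ A] {p : Λ → ZMod 2} {f : Λ → Λ → Λ → ℂ}
  {X D E : Λ → A}

/-- The coefficient `φ_d = -½ Σ_{a,c} (-1)^{[E_a]+[E_a][E_c]} ad(E_a)_{dc} X_a X_c` of the vector
field `δ₂ = Σ_d φ_d ∂_d`. It is homogeneous of parity `p d`. -/
def phi (p : Λ → ZMod 2) (f : Λ → Λ → Λ → ℂ) (X : Λ → A) (d : Λ) : A :=
  (-1 / 2 : ℂ) • ∑ a, ∑ c, (sgn (p a + p a * p c) * f a d c) • (X a * X c)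

/-- The super-derivative `∂_b φ_d = -Σ_c (-1)^{[E_b]+[E_b][E_c]} ad(E_b)_{dc} X_c`. -/
def dphi (p : Λ → ZMod 2) (f : Λ → Λ → Λ → ℂ) (X : Λ → A) (b d : Λ) : A :=
  -∑ c, (sgn (p b + p b * p c) * f b d c) • X c

theorem x_phi (hL : LieAx p f) (hW : WUAx p f X D E) (a d : Λ) :
    SC (sgn ((p a + 1) * p d)) (X a) (phi p f X d) := by
  refine SC.smul_right fun _ => SC.sum_right fun b => SC.sum_right fun c => SC.smul_right fun h => ?_
  rw [hL.par _ _ _ (right_ne_zero_of_mul h)]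
  refine ((hW.xx a b).mul_right (hW.xx a c)).of_eq ?_
  rw [← sgn_add]
  congr 1
  generalize p a = u; generalize p b = v; generalize p c = w
  decide +revert

theorem e_phi (hL : LieAx p f) (hW : WUAx p f X D E) (a d : Λ) :
    SC (sgn (p a * p d)) (E a) (phi p f X d) := by
  refine SC.smul_right fun _ => SC.sum_right fun b => SC.sum_right fun c => SC.smul_right fun h => ?_
  rw [hL.par _ _ _ (right_ne_zero_of_mul h)]
  refine ((hW.ex a b).mul_right (hW.ex a c)).of_eq ?_
  rw [← sgn_add]
  congr 1
  generalize p a = u; generalize p b = v; generalize p c = w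
  decide +revert

theorem phi_phi (hL : LieAx p f) (hW : WUAx p f X D E) (b d : Λ) :
    SC (sgn (p b * p d)) (phi p f X b) (phi p f X d) := by
  refine SC.smul_left fun _ => SC.sum_left fun a => SC.sum_left fun c => SC.smul_left fun h => ?_
  rw [hL.par _ _ _ (right_ne_zero_of_mul h)]
  refine ((x_phi hL hW a d).mul_left (x_phi hL hW c d)).of_eq ?_
  rw [← sgn_add]
  congr 1
  generalize p a = u; generalize p d = v; generalize p c = w
  decide +revert

theorem d_phi (hL : LieAx p f) (hW : WUAx p f X D E) (b d : Λ) :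
    D b * phi p f X d = sgn ((p b + 1) * p d) • (phi p f X d * D b) + dphi p f X b d := by
  -- Leibniz rule on a single monomial of `φ_d`
  have key : ∀ a c, (sgn (p a + p a * p c) * f a d c) • (D b * (X a * X c)) =
      sgn ((p b + 1) * p d) • ((sgn (p a + p a * p c) * f a d c) • (X a * X c * D b)) +
      ((if b = a then (sgn (p a + p a * p c) * f a d c) • X c else 0) +
       (if b = c then (sgn (p a + p a * p c) * f a d c * sgn ((p b + 1) * (p a + 1))) • X a
        else 0)) := by
    intro a c
    by_cases h0 : f a d c = 0
    · simp [h0]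
    have hs : sgn ((p b + 1) * p d) =
        sgn ((p b + 1) * (p a + 1)) * sgn ((p b + 1) * (p c + 1)) := by
      rw [hL.par _ _ _ h0, ← sgn_add]
      congr 1
      generalize p a = u; generalize p b = v; generalize p c = w
      decide +revert
    have e : D b * (X a * X c) = sgn ((p b + 1) * p d) • (X a * X c * D b) +
        ((if b = a then X c else 0) +
          (if b = c then sgn ((p b + 1) * (p a + 1)) • X a else 0)) := by
      rw [hs, ← mul_assoc, hW.dx, add_mul, smul_mul_assoc, mul_assoc, hW.dx, mul_add (X a),
        mul_smul_comm, smul_add, smul_smul, ← mul_assoc]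
      split_ifs <;> simp
      abel
    rw [e, smul_add, smul_add, smul_comm]
    split_ifs <;> simp [smul_smul]
  -- the two contractions agree by skew-symmetry of the bracket
  have h2 : ∀ c, (sgn (p c + p c * p b) * f c d b * sgn ((p b + 1) * (p c + 1))) • X c =
      (sgn (p b + p b * p c) * f b d c) • X c := by
    intro c
    congr 1
    rw [hL.skew c d b]
    have : sgn (p c + p c * p b) * sgn (p c * p b) * sgn ((p b + 1) * (p c + 1)) =
        - sgn (p b + p b * p c) := by
      rw [← neg_one_mul, ← sgn_one, ← sgn_add, ← sgn_add, ← sgn_add]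
      congr 1
      generalize p b = v; generalize p c = w
      decide +revert
    linear_combination (-f b d c) * this
  have lhs : D b * phi p f X d = (-1 / 2 : ℂ) • ∑ a, ∑ c,
      (sgn (p a + p a * p c) * f a d c) • (D b * (X a * X c)) := by
    simp only [phi, Finset.mul_sum, mul_smul_comm]
  have rhs : phi p f X d * D b = (-1 / 2 : ℂ) • ∑ a, ∑ c,
      (sgn (p a + p a * p c) * f a d c) • (X a * X c * D b) := by
    simp only [phi, Finset.sum_mul, smul_mul_assoc]
  have c1 : ∑ a, ∑ c, (if b = a then (sgn (p a + p a * p c) * f a d c) • X c else 0) =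
      ∑ c, (sgn (p b + p b * p c) * f b d c) • X c := by
    rw [Finset.sum_comm]; simp
  have c2 : ∑ a, ∑ c, (if b = c then
      (sgn (p a + p a * p c) * f a d c * sgn ((p b + 1) * (p a + 1))) • X a else 0) =
      ∑ c, (sgn (p b + p b * p c) * f b d c) • X c := by
    simp [h2]
  rw [lhs, rhs]
  simp only [key, Finset.sum_add_distrib, ← Finset.smul_sum]
  rw [c1, c2, dphi, smul_add, smul_comm]
  congr 1
  rw [← two_smul ℂ, smul_smul]
  norm_num

/-- The Jacobi identity in the form `Σ_b φ_b ∂_b φ_d = 0`. -/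
theorem phi_dphi (hL : LieAx p f) (hW : WUAx p f X D E) (d : Λ) :
    ∑ b, phi p f X b * dphi p f X b d = 0 := by
  let J : Λ → Λ → Λ → ℂ := fun a c e => ∑ b, f a b c * f b d e
  let σ : Λ → Λ → Λ → ℂ := fun a c e => sgn (p c + (p a * p c + p a * p e + p c * p e))
  let T : Λ → Λ → Λ → A := fun a c e => (σ a c e * J a c e) • (X a * X c * X e)
  have hJ : ∀ a c e, J a c e =
      -(sgn (p a * (p c + p e)) * J c e a) + sgn (p c * p e) * J a e c := by
    intro a c e
    have h := hL.jac a c e d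
    have h1 : ∑ b, f c b e * f a d b = -(sgn (p a * (p c + p e)) * J c e a) := by
      simp only [J, Finset.mul_sum, ← Finset.sum_neg_distrib]
      refine Finset.sum_congr rfl fun b _ => ?_
      by_cases h0 : f c b e = 0
      · simp [h0]
      rw [hL.skew a d b, hL.par _ _ _ h0]; ring
    have h2 : sgn (p a * p c) * ∑ b, f a b e * f c d b = -(sgn (p c * p e) * J a e c) := by
      simp only [J, Finset.mul_sum, ← Finset.sum_neg_distrib]
      refine Finset.sum_congr rfl fun b _ => ?_
      by_cases h0 : f a b e = 0
      · simp [h0]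
      rw [hL.skew c d b, hL.par _ _ _ h0]
      have : sgn (p a * p c) * sgn (p c * (p a + p e)) = sgn (p c * p e) := by
        rw [← sgn_add]
        congr 1
        generalize p a = u; generalize p c = v; generalize p e = w
        decide +revert
      linear_combination (-f a b e * f b d c) * this
    rw [h1, h2] at h
    linear_combination -h
  have hT : ∀ a c e, T a c e = -T c e a - T a e c := by
    intro a c e
    -- reorder the monomials of the two Jacobi terms
    have r1 : X a * X c * X e = sgn ((p a + 1) * (p c + p e)) • (X c * X e * X a) := by
      rw [mul_assoc]
      refine ((hW.xx a c).mul_right (hW.xx a e)).of_eq ?_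
      rw [← sgn_add]
      congr 1
      generalize p a = u; generalize p c = v; generalize p e = w
      decide +revert
    have r2 : X a * X c * X e = sgn ((p c + 1) * (p e + 1)) • (X a * X e * X c) := by
      rw [mul_assoc, hW.xx c e, mul_smul_comm, mul_assoc]
    have s1 : σ a c e * sgn (p a * (p c + p e)) * sgn ((p a + 1) * (p c + p e)) = σ c e a := by
      simp only [σ, ← sgn_add]
      congr 1
      generalize p a = u; generalize p c = v; generalize p e = w
      decide +revert
    have s2 : σ a c e * sgn (p c * p e) * sgn ((p c + 1) * (p e + 1)) = -σ a e c := by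
      rw [← neg_one_mul, ← sgn_one]
      simp only [σ, ← sgn_add]
      congr 1
      generalize p a = u; generalize p c = v; generalize p e = w
      decide +revert
    calc T a c e = (-(σ a c e * sgn (p a * (p c + p e)) * J c e a)) • (X a * X c * X e) +
          (σ a c e * sgn (p c * p e) * J a e c) • (X a * X c * X e) := by
          rw [← add_smul]
          simp only [T]
          rw [hJ a c e]
          congr 1
          ring
      _ = (-(σ a c e * sgn (p a * (p c + p e)) * J c e a)) •
            (sgn ((p a + 1) * (p c + p e)) • (X c * X e * X a)) +
          (σ a c e * sgn (p c * p e) * J a e c) •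
            (sgn ((p c + 1) * (p e + 1)) • (X a * X e * X c)) := by
          rw [← r1, ← r2]
      _ = -T c e a - T a e c := by
          simp only [T, smul_smul, ← s1]
          rw [← neg_smul, sub_eq_add_neg, ← neg_smul]
          congr 2
          · ring
          · linear_combination J a e c * s2
  have hsum : ∑ a, ∑ c, ∑ e, T a c e = 0 := by
    set S := ∑ a, ∑ c, ∑ e, T a c e with hS
    have h1 : ∑ a, ∑ c, ∑ e, T c e a = S := by
      rw [Finset.sum_comm]
      exact Finset.sum_congr rfl fun c _ => Finset.sum_comm
    have h2 : ∑ a, ∑ c, ∑ e, T a e c = S :=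
      Finset.sum_congr rfl fun a _ => Finset.sum_comm
    have h3 : S = -S - S := by
      conv_lhs => rw [hS]
      rw [Finset.sum_congr rfl fun a _ => Finset.sum_congr rfl fun c _ =>
        Finset.sum_congr rfl fun e _ => hT a c e]
      simp only [Finset.sum_sub_distrib, Finset.sum_neg_distrib]
      rw [h1, h2]
    have h4 : (3 : ℂ) • S = 0 := by
      have : S - (-S - S) = 0 := sub_eq_zero.mpr h3
      rw [← this]; module
    exact (smul_eq_zero.mp h4).resolve_left (by norm_num)
  have expand : ∀ b, phi p f X b * dphi p f X b d = (1 / 2 : ℂ) • ∑ a, ∑ c, ∑ e,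
      (σ a c e * (f a b c * f b d e)) • (X a * X c * X e) := by
    intro b
    simp only [phi, dphi]
    rw [mul_neg, smul_mul_assoc, ← neg_smul, neg_div, neg_neg, Finset.sum_mul]
    congr 1
    refine Finset.sum_congr rfl fun a _ => ?_
    rw [Finset.sum_mul]
    refine Finset.sum_congr rfl fun c _ => ?_
    rw [Finset.mul_sum]
    refine Finset.sum_congr rfl fun e _ => ?_
    rw [smul_mul_smul_comm]
    congr 1
    by_cases h0 : f a b c = 0
    · simp [h0]
    have : sgn (p a + p a * p c) * sgn (p b + p b * p e) = σ a c e := by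
      rw [hL.par _ _ _ h0]
      simp only [σ, ← sgn_add]
      congr 1
      generalize p a = u; generalize p c = v; generalize p e = w
      decide +revert
    rw [← this]; ring
  rw [Finset.sum_congr rfl fun b _ => expand b, ← Finset.smul_sum]
  refine smul_eq_zero_of_right _ (Eq.trans ?_ hsum)
  rw [Finset.sum_comm]
  refine Finset.sum_congr rfl fun a _ => ?_
  rw [Finset.sum_comm]
  refine Finset.sum_congr rfl fun c _ => ?_
  rw [Finset.sum_comm]
  refine Finset.sum_congr rfl fun e _ => ?_
  rw [← Finset.sum_smul, ← Finset.mul_sum]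

theorem d2_sq (hL : LieAx p f) (hW : WUAx p f X D E) :
    (∑ d, phi p f X d * D d) * (∑ d, phi p f X d * D d) = 0 := by
  have key : ∀ b d, (phi p f X b * D b) * (phi p f X d * D d) =
      sgn ((p b + 1) * p d) • (phi p f X b * phi p f X d * (D b * D d)) +
      phi p f X b * dphi p f X b d * D d := by
    intro b d
    rw [mul_assoc, ← mul_assoc (D b), d_phi hL hW, add_mul, mul_add, smul_mul_assoc,
      mul_smul_comm]
    simp only [mul_assoc]
  rw [Finset.sum_mul_sum]
  simp only [key, Finset.sum_add_distrib]
  -- the second-order part is super-antisymmetric, the first-order part vanishes by Jacobi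
  rw [sum_antisymm, Finset.sum_comm, zero_add]
  · refine Finset.sum_eq_zero fun d _ => ?_
    rw [← Finset.sum_mul, phi_dphi hL hW, zero_mul]
  · intro b d
    rw [phi_phi hL hW b d, hW.dd b d, smul_mul_smul_comm, smul_smul, ← neg_smul]
    congr 1
    rw [← neg_one_mul, ← sgn_one]
    simp only [← sgn_add]
    congr 1
    generalize p b = u; generalize p d = v
    decide +revert

theorem d1_sq (hW : WUAx p f X D E) :
    (∑ a, sgn (p a) • (X a * E a)) * (∑ a, sgn (p a) • (X a * E a)) =
    (1 / 2 : ℂ) • ∑ a, ∑ b, ∑ e, (sgn (p b + p a * p b) * f a e b) • (X a * X b * E e) := by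
  let M : Λ → Λ → A := fun a b => sgn (p b + p a * p b) • (X a * X b * (E a * E b))
  have key : ∀ a b, (sgn (p a) • (X a * E a)) * (sgn (p b) • (X b * E b)) = M a b := by
    intro a b
    rw [smul_mul_smul_comm, mul_assoc, ← mul_assoc (E a), hW.ex a b, smul_mul_assoc,
      mul_smul_comm, smul_smul, ← mul_assoc, ← mul_assoc, mul_assoc (X a * X b)]
    simp only [M, ← sgn_add]
    congr 2
    generalize p a = u; generalize p b = v
    decide +revert
  have hM : ∀ a b, M a b + M b a = ∑ e, (sgn (p b + p a * p b) * f a e b) • (X a * X b * E e) := by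
    intro a b
    have e1 : M b a = (-sgn (p b)) • (X a * X b * (E b * E a)) := by
      simp only [M]
      rw [hW.xx b a, smul_mul_assoc, smul_smul, ← neg_one_mul, ← sgn_one]
      simp only [← sgn_add]
      congr 2
      generalize p a = u; generalize p b = v
      decide +revert
    have e2 : sgn (p b + p a * p b) * sgn (p a * p b) = sgn (p b) := by
      rw [sgn_add, mul_assoc, sgn_mul_self, mul_one]
    rw [e1]
    simp only [M]
    rw [hW.ee a b, mul_add, smul_add, mul_smul_comm, smul_smul, e2, add_right_comm, ← add_smul,
      add_neg_cancel, zero_smul, zero_add, Finset.mul_sum, Finset.smul_sum]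
    exact Finset.sum_congr rfl fun e _ => by rw [mul_smul_comm, smul_smul]
  rw [Finset.sum_mul_sum]
  simp only [key, ← hM, Finset.sum_add_distrib]
  rw [Finset.sum_comm (f := fun a b => M b a), ← two_smul ℂ, smul_smul]
  norm_num

theorem d1_d2 (hL : LieAx p f) (hW : WUAx p f X D E) :
    (∑ a, sgn (p a) • (X a * E a)) * (∑ d, phi p f X d * D d) +
      (∑ d, phi p f X d * D d) * (∑ a, sgn (p a) • (X a * E a)) =
    -((∑ a, sgn (p a) • (X a * E a)) * (∑ a, sgn (p a) • (X a * E a))) := by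
  -- only the contraction of `∂_d` with `X_d` survives
  have key : ∀ a d, (sgn (p a) • (X a * E a)) * (phi p f X d * D d) +
      (phi p f X d * D d) * (sgn (p a) • (X a * E a)) =
      if d = a then sgn (p a) • (phi p f X d * E a) else 0 := by
    intro a d
    have h1 : X a * E a * phi p f X d = sgn (p d) • (phi p f X d * (X a * E a)) := by
      refine ((x_phi hL hW a d).mul_left (e_phi hL hW a d)).of_eq ?_
      rw [← sgn_add]
      congr 1
      generalize p a = u; generalize p d = v
      decide +revert
    have h2 : sgn (p d) * sgn (p a * (p d + 1)) = - sgn ((p d + 1) * (p a + 1)) := by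
      rw [← neg_one_mul, ← sgn_one]
      simp only [← sgn_add]
      congr 1
      generalize p a = u; generalize p d = v
      decide +revert
    have h3 : X a * E a * (phi p f X d * D d) =
        (-sgn ((p d + 1) * (p a + 1))) • (phi p f X d * (X a * (D d * E a))) := by
      rw [← mul_assoc, h1, smul_mul_assoc, mul_assoc, mul_assoc, hW.ed a d, mul_smul_comm,
        mul_smul_comm, smul_smul, h2]
    have h4 : phi p f X d * D d * (X a * E a) =
        sgn ((p d + 1) * (p a + 1)) • (phi p f X d * (X a * (D d * E a))) +
        if d = a then phi p f X d * E a else 0 := by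
      rw [mul_assoc, ← mul_assoc (D d), hW.dx, add_mul, mul_add (phi p f X d), smul_mul_assoc,
        mul_smul_comm, mul_assoc (X a)]
      split_ifs <;> simp
    rw [smul_mul_assoc, mul_smul_comm, ← smul_add, h3, h4, neg_smul, neg_add_cancel_left]
    split_ifs <;> simp
  rw [d1_sq hW, Finset.sum_mul_sum, Finset.sum_mul_sum,
    Finset.sum_comm (f := fun i j => phi p f X i * D i * (sgn (p j) • (X j * E j)))]
  simp only [← Finset.sum_add_distrib, key]
  simp only [Finset.sum_ite_eq', Finset.mem_univ, if_true]
  have h5 : ∀ d, sgn (p d) • (phi p f X d * E d) = (-1 / 2 : ℂ) • ∑ a, ∑ c,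
      (sgn (p c + p a * p c) * f a d c) • (X a * X c * E d) := by
    intro d
    rw [phi, smul_mul_assoc, smul_comm, Finset.sum_mul, Finset.smul_sum]
    congr 1
    refine Finset.sum_congr rfl fun a _ => ?_
    rw [Finset.sum_mul, Finset.smul_sum]
    refine Finset.sum_congr rfl fun c _ => ?_
    rw [smul_mul_assoc, smul_smul]
    congr 1
    by_cases h0 : f a d c = 0
    · simp [h0]
    rw [hL.par _ _ _ h0, ← mul_assoc, ← sgn_add]
    congr 2
    generalize p a = u; generalize p c = v
    decide +revert
  rw [Finset.sum_congr rfl fun d _ => h5 d, ← Finset.smul_sum, neg_div, neg_smul,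
    Finset.sum_comm]
  congr 2
  exact Finset.sum_congr rfl fun a _ => Finset.sum_comm

theorem d2_expand (p : Λ → ZMod 2) (f : Λ → Λ → Λ → ℂ) (X D : Λ → A) :
    (1 / 2 : ℂ) • ∑ a : Λ, sgn (p a) •
      (X a * -∑ d : Λ, ∑ c : Λ, (sgn (p a * p c) * f a d c) • (X c * D d)) =
    (-1 / 2 : ℂ) • ∑ a, ∑ d, ∑ c, (sgn (p a + p a * p c) * f a d c) • (X a * X c * D d) := by
  rw [neg_div, neg_smul, ← smul_neg, ← Finset.sum_neg_distrib]
  congr 1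
  refine Finset.sum_congr rfl fun a _ => ?_
  rw [mul_neg, smul_neg, Finset.mul_sum, Finset.smul_sum]
  congr 1
  refine Finset.sum_congr rfl fun d _ => ?_
  rw [Finset.mul_sum, Finset.smul_sum]
  refine Finset.sum_congr rfl fun c _ => ?_
  rw [mul_smul_comm, smul_smul, ← mul_assoc, ← mul_assoc, ← sgn_add]

end Abstract

/-! ### The algebra `W ⊗ U(g)` -/

theorem wuAx (p : Λ → ZMod 2) (f : Λ → Λ → Λ → ℂ) :
    WUAx p f (XU p f) (DU p f) (EU p f) where
  xx a b := by
    have h := RingQuot.mkAlgHom_rel ℂ (WURel.XX (p := p) (f := f) a b)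
    simp only [map_mul, map_smul] at h
    exact h
  dd a b := by
    have h := RingQuot.mkAlgHom_rel ℂ (WURel.DD (p := p) (f := f) a b)
    simp only [map_mul, map_smul] at h
    exact h
  dx a b := by
    have h := RingQuot.mkAlgHom_rel ℂ (WURel.DX (p := p) (f := f) a b)
    rw [map_mul, map_add, map_smul, map_mul, apply_ite (RingQuot.mkAlgHom ℂ (WURel p f)),
      map_one, map_zero] at h
    exact h
  ee a b := by
    have h := RingQuot.mkAlgHom_rel ℂ (WURel.EE (p := p) (f := f) a b)
    simp only [map_mul, map_add, map_smul, map_sum] at h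
    exact h
  ex a b := by
    have h := RingQuot.mkAlgHom_rel ℂ (WURel.EX (p := p) (f := f) a b)
    simp only [map_mul, map_smul] at h
    exact h
  ed a b := by
    have h := RingQuot.mkAlgHom_rel ℂ (WURel.ED (p := p) (f := f) a b)
    simp only [map_mul, map_smul] at h
    exact h

theorem delta2_expand (p : Λ → ZMod 2) (f : Λ → Λ → Λ → ℂ) :
    delta2 p f = (-1 / 2 : ℂ) • ∑ a, ∑ d, ∑ c,
      (sgn (p a + p a * p c) * f a d c) • (XU p f a * XU p f c * DU p f d) :=
  d2_expand p f (XU p f) (DU p f)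

theorem delta2_eq (p : Λ → ZMod 2) (f : Λ → Λ → Λ → ℂ) :
    delta2 p f = ∑ d, phi p f (XU p f) d * DU p f d := by
  rw [delta2_expand, Finset.sum_comm, Finset.smul_sum]
  refine Finset.sum_congr rfl fun d _ => ?_
  simp only [phi, smul_mul_assoc, Finset.sum_mul]

theorem delta1_mem (p : Λ → ZMod 2) (f : Λ → Λ → Λ → ℂ) : delta1 p f ∈ WUpar p f 1 := by
  refine Submodule.sum_mem _ fun a _ => Submodule.smul_mem _ _ (Submodule.subset_span
    ⟨[WUGen.X a, WUGen.E a], by simp [XU, EU], ?_⟩)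
  simp only [List.map_cons, List.map_nil, List.sum_cons, List.sum_nil, WUGen.parity]
  generalize p a = u
  decide +revert

theorem delta2_mem (p : Λ → ZMod 2) (f : Λ → Λ → Λ → ℂ)
    (hpar : ∀ a b c, f a b c ≠ 0 → p b = p a + p c) : delta2 p f ∈ WUpar p f 1 := by
  rw [delta2_expand]
  refine Submodule.smul_mem _ _ (Submodule.sum_mem _ fun a _ => Submodule.sum_mem _ fun d _ =>
    Submodule.sum_mem _ fun c _ => ?_)
  by_cases h0 : f a d c = 0
  · simp [h0]
  refine Submodule.smul_mem _ _ (Submodule.subset_span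
    ⟨[WUGen.X a, WUGen.X c, WUGen.D d], by simp [XU, DU, mul_assoc], ?_⟩)
  simp only [List.map_cons, List.map_nil, List.sum_cons, List.sum_nil, WUGen.parity]
  rw [hpar _ _ _ h0]
  generalize p a = u; generalize p c = v
  decide +revert

/-- Lemma 3.7 of the paper (the key BRST lemma): writing `[x,y] = xy + yx` for the
super-commutator of the odd elements `δ₁, δ₂`, we have
`[δ₁,δ₂] + [δ₂,δ₁] = -[δ₁,δ₁]`, `[δ₂,δ₂] = 0`, and hence `(δ₁ + δ₂)² = 0`.
(The elements `δ₁, δ₂` are indeed odd: they lie in the odd homogeneous subspace.) -/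
theorem delta_squares_to_zero
    (p : Λ → ZMod 2) (f : Λ → Λ → Λ → ℂ)
    (hpar : ∀ a b c, f a b c ≠ 0 → p b = p a + p c)
    (hskew : ∀ a b c, f a b c = -sgn (p a * p c) * f c b a)
    (hjac : ∀ a b c d, ∑ e : Λ, f b e c * f a d e =
      ∑ e : Λ, f a e b * f e d c + sgn (p a * p b) * ∑ e : Λ, f a e c * f b d e) :
    -- δ₁ and δ₂ are odd:
    delta1 p f ∈ WUpar p f 1 ∧
    delta2 p f ∈ WUpar p f 1 ∧
    -- [δ₁, δ₂] + [δ₂, δ₁] = -[δ₁, δ₁]: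
    (delta1 p f * delta2 p f + delta2 p f * delta1 p f)
        + (delta2 p f * delta1 p f + delta1 p f * delta2 p f)
      = -(delta1 p f * delta1 p f + delta1 p f * delta1 p f) ∧
    -- [δ₂, δ₂] = 0:
    delta2 p f * delta2 p f + delta2 p f * delta2 p f = 0 ∧
    -- δ² = 0:
    deltaWU p f * deltaWU p f = 0 := by
  have hL : LieAx p f := ⟨hpar, hskew, hjac⟩
  have hW := wuAx p f
  have h12 : delta1 p f * delta2 p f + delta2 p f * delta1 p f = -(delta1 p f * delta1 p f) := by
    rw [delta2_eq]; exact d1_d2 hL hW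
  have h22 : delta2 p f * delta2 p f = 0 := by
    rw [delta2_eq]; exact d2_sq hL hW
  refine ⟨delta1_mem p f, delta2_mem p f hpar, ?_, ?_, ?_⟩
  · rw [add_comm (delta2 p f * delta1 p f), h12, neg_add]
  · rw [h22, add_zero]
  · rw [deltaWU, add_mul, mul_add, mul_add, h22, add_zero, add_assoc, h12, add_neg_cancel]
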